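/- Let f : [0,∞) → ℝ satisfy |f(x) − f(y)| ≤ L|x − y|^α/(x + y)^{α/2} for all x, y ∈ [0,∞), with L > 0 and α ∈ (0,1] (the general Hölder-type condition with γ = 0 and β = α/2). Then for all n ≥ 1 and uniformly for all x ∈ (0,∞), the Szász-Mirakjan operator satisfies |f(x) − S_n(f;x)| ≤ L/n^{α/2}. -/

import Mathlib

/-!
`S_n(f; x)` is the mean of `f (N / n)` for a Poisson variable `N` of rate `n * x`, and `N / n` has
mean `x` and variance `x / n`. Since `t ↦ t ^ (α / 2)` is concave, Jensen's inequality gives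
`𝔼 |x - N / n| ^ α ≤ (x / n) ^ (α / 2)`. At a fixed `x` the Hölder-type condition implies an
ordinary Hölder condition with constant `L / x ^ (α / 2)`, so the powers of `x` cancel.
-/

open MeasureTheory ProbabilityTheory
open scoped NNReal

section Jensen

variable {Ω E F : Type*} {mΩ : MeasurableSpace Ω} {μ : Measure Ω} [IsProbabilityMeasure μ]
  [NormedAddCommGroup E] [NormedAddCommGroup F] [NormedSpace ℝ F] [CompleteSpace F]
  {Z : Ω → E} {g : Ω → F} {p q : ℝ}

lemma integral_norm_rpow_le_rpow_integral_norm_rpow (hZ : AEStronglyMeasurable Z μ)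
    (hp : 0 ≤ p) (hpq : p ≤ q) (hq : 0 < q) (hint : Integrable (fun ω => ‖Z ω‖ ^ q) μ) :
    ∫ ω, ‖Z ω‖ ^ p ∂μ ≤ (∫ ω, ‖Z ω‖ ^ q ∂μ) ^ (p / q) := by
  have hrpow (ω : Ω) : (‖Z ω‖ ^ q) ^ (p / q) = ‖Z ω‖ ^ p := by
    rw [← Real.rpow_mul (norm_nonneg _), mul_div_cancel₀ _ hq.ne']
  have hexp : 0 ≤ p / q := by positivity
  have hconcave : ConcaveOn ℝ (Set.Ici 0) fun t : ℝ => t ^ (p / q) :=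
    Real.concaveOn_rpow hexp (div_le_one_of_le₀ hpq hq.le)
  have hcont : ContinuousOn (fun t : ℝ => t ^ (p / q)) (Set.Ici 0) :=
    continuousOn_id.rpow_const fun _ _ => .inr hexp
  have hnonneg : ∀ᵐ ω ∂μ, ‖Z ω‖ ^ q ∈ Set.Ici (0 : ℝ) :=
    ae_of_all μ fun ω => Real.rpow_nonneg (norm_nonneg _) q
  have hint_p : Integrable ((fun t : ℝ => t ^ (p / q)) ∘ fun ω => ‖Z ω‖ ^ q) μ := by
    simpa only [Function.comp_def, hrpow] using integrable_norm_rpow_of_le hZ hp hq.le hpq hint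
  simpa only [hrpow] using hconcave.le_map_integral hcont isClosed_Ici hnonneg hint hint_p

lemma norm_sub_integral_le_of_norm_sub_le_rpow (hZ : AEStronglyMeasurable Z μ)
    (hg : AEStronglyMeasurable g μ) (hp : 0 ≤ p) (hpq : p ≤ q) (hq : 0 < q)
    (hint : Integrable (fun ω => ‖Z ω‖ ^ q) μ) {a : F} {M : ℝ} (hM : 0 ≤ M)
    (hbound : ∀ ω, ‖a - g ω‖ ≤ M * ‖Z ω‖ ^ p) :
    ‖a - ∫ ω, g ω ∂μ‖ ≤ M * (∫ ω, ‖Z ω‖ ^ q ∂μ) ^ (p / q) := by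
  have hmajorant : Integrable (fun ω => M * ‖Z ω‖ ^ p) μ :=
    (integrable_norm_rpow_of_le hZ hp hq.le hpq hint).const_mul M
  have hdiff : Integrable (fun ω => a - g ω) μ :=
    hmajorant.mono' (aestronglyMeasurable_const.sub hg) (ae_of_all μ hbound)
  have hg_int : Integrable g μ := by
    simpa only [Pi.sub_def, sub_sub_cancel] using (integrable_const a).sub hdiff
  calc ‖a - ∫ ω, g ω ∂μ‖
      = ‖∫ ω, (a - g ω) ∂μ‖ := by
        rw [integral_sub (integrable_const a) hg_int, integral_const, probReal_univ, one_smul]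
    _ ≤ ∫ ω, M * ‖Z ω‖ ^ p ∂μ := norm_integral_le_of_norm_le hmajorant (ae_of_all μ hbound)
    _ = M * ∫ ω, ‖Z ω‖ ^ p ∂μ := integral_const_mul M _
    _ ≤ M * (∫ ω, ‖Z ω‖ ^ q ∂μ) ^ (p / q) := by
        gcongr
        exact integral_norm_rpow_le_rpow_integral_norm_rpow hZ hp hpq hq hint

end Jensen

section PoissonMoments

variable (r : ℝ≥0)

lemma poisson_weight_succ_mul (k : ℕ) :
    Real.exp (-r) * r ^ (k + 1) / (k + 1).factorial * (k + 1 : ℕ)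
      = r * (Real.exp (-r) * r ^ k / k.factorial) := by
  rw [Nat.factorial_succ]
  push_cast
  field_simp
  ring

variable {r} in
lemma integrable_natCast_mul_poissonMeasure {g : ℕ → ℝ}
    (hg : Integrable (fun k => g (k + 1)) (poissonMeasure r)) :
    Integrable (fun k => k * g k) (poissonMeasure r) := by
  rw [integrable_poissonMeasure_iff] at hg ⊢
  rw [← summable_nat_add_iff 1]
  simpa only [norm_mul, RCLike.norm_natCast, ← mul_assoc, poisson_weight_succ_mul]
    using hg.mul_left (r : ℝ)

lemma integral_natCast_mul_poissonMeasure (g : ℕ → ℝ) :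
    ∫ k, k * g k ∂poissonMeasure r = r * ∫ k, g (k + 1) ∂poissonMeasure r := by
  let weighted (k : ℕ) : ℝ := Real.exp (-r) * r ^ k / k.factorial * (k * g k)
  have hsupport : Function.support weighted ⊆ Set.range Nat.succ := fun k hk => by
    have hk0 : k ≠ 0 := by
      rintro rfl
      simp [weighted] at hk
    exact ⟨k - 1, Nat.succ_pred hk0⟩
  calc ∫ k, k * g k ∂poissonMeasure r
      = ∑' k, weighted k := integral_poissonMeasure r _
    _ = ∑' k, weighted (k + 1) := (Nat.succ_injective.tsum_eq hsupport).symm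
    _ = ∑' k, r * (Real.exp (-r) * r ^ k / k.factorial * g (k + 1)) := by
        simp only [weighted, ← mul_assoc, poisson_weight_succ_mul]
    _ = r * ∫ k, g (k + 1) ∂poissonMeasure r := by
        simp only [tsum_mul_left, integral_poissonMeasure, smul_eq_mul]

lemma integrable_natCast_poissonMeasure :
    Integrable (fun k : ℕ => (k : ℝ)) (poissonMeasure r) := by
  simpa only [mul_one] using
    integrable_natCast_mul_poissonMeasure (g := fun _ => 1) (integrable_const 1)

lemma integral_natCast_poissonMeasure : ∫ k : ℕ, (k : ℝ) ∂poissonMeasure r = r := by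
  simpa using integral_natCast_mul_poissonMeasure r fun _ => 1

lemma memLp_two_natCast_poissonMeasure :
    MemLp (fun k : ℕ => (k : ℝ)) 2 (poissonMeasure r) := by
  rw [memLp_two_iff_integrable_sq .of_discrete]
  simp_rw [sq]
  refine integrable_natCast_mul_poissonMeasure ?_
  simpa only [Nat.cast_succ, Pi.add_def] using
    (integrable_natCast_poissonMeasure r).add (integrable_const 1)

lemma integral_natCast_sq_poissonMeasure :
    ∫ k : ℕ, (k : ℝ) ^ 2 ∂poissonMeasure r = r * (r + 1) := by
  simp_rw [sq, integral_natCast_mul_poissonMeasure, Nat.cast_succ]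
  rw [integral_add (integrable_natCast_poissonMeasure r) (integrable_const 1),
    integral_natCast_poissonMeasure, integral_const, probReal_univ, one_smul]

lemma variance_natCast_poissonMeasure : Var[fun k : ℕ => (k : ℝ); poissonMeasure r] = r := by
  rw [variance_eq_sub (memLp_two_natCast_poissonMeasure r)]
  simp only [Pi.pow_apply, integral_natCast_sq_poissonMeasure, integral_natCast_poissonMeasure]
  ring

end PoissonMoments

/-- The Szász–Mirakjan operator `S_n`, with an arbitrary real parameter `n` in place of the usual
positive integer; its value is `0` where the series is not summable. -/
noncomputable def szaszMirakjan (n : ℝ) (f : ℝ → ℝ) (x : ℝ) : ℝ :=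
  ∑' k : ℕ, f (k / n) * (Real.exp (-(n * x)) * (n * x) ^ k / k.factorial)

section SzaszMirakjan

variable {f : ℝ → ℝ} {n x : ℝ}

lemma szaszMirakjan_eq_integral_poissonMeasure (h : 0 ≤ n * x) :
    szaszMirakjan n f x = ∫ k : ℕ, f (k / n) ∂poissonMeasure (n * x).toNNReal := by
  simp only [szaszMirakjan, integral_poissonMeasure, Real.coe_toNNReal _ h, smul_eq_mul, mul_comm]

lemma integral_natCast_div_sub_sq_poissonMeasure (hn : 0 < n) (hx : 0 ≤ x) :
    ∫ k : ℕ, (k / n - x) ^ 2 ∂poissonMeasure (n * x).toNNReal = x / n := by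
  have hnx : 0 ≤ n * x := by positivity
  have hscale (k : ℕ) : (k / n - x) ^ 2 = (k - n * x) ^ 2 / n ^ 2 := by
    field_simp
  have hvar := variance_natCast_poissonMeasure (n * x).toNNReal
  rw [variance_eq_integral .of_discrete, integral_natCast_poissonMeasure,
    Real.coe_toNNReal _ hnx] at hvar
  simp_rw [hscale]
  rw [integral_div, hvar]
  field_simp

lemma abs_sub_szaszMirakjan_le_of_holder_at {M α : ℝ} (hα : 0 ≤ α) (hα2 : α ≤ 2) (hM : 0 ≤ M)
    (hn : 0 < n) (hx : 0 ≤ x) (hf : ∀ y, 0 ≤ y → |f x - f y| ≤ M * |x - y| ^ α) :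
    |f x - szaszMirakjan n f x| ≤ M * (x / n) ^ (α / 2) := by
  have hnx : 0 ≤ n * x := by positivity
  have hint : Integrable (fun k : ℕ => ‖k / n - x‖ ^ (2 : ℝ))
      (poissonMeasure (n * x).toNNReal) := by
    simpa [div_eq_mul_inv] using (((memLp_two_natCast_poissonMeasure _).mul_const n⁻¹).sub
      (memLp_const x)).integrable_norm_rpow'
  have hbound (k : ℕ) : ‖f x - f (k / n)‖ ≤ M * ‖k / n - x‖ ^ α := by
    rw [norm_sub_rev (k / n : ℝ)]
    exact hf _ (by positivity)
  have h := norm_sub_integral_le_of_norm_sub_le_rpow .of_discrete .of_discrete hα hα2 two_pos hint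
    hM hbound
  simpa only [Real.norm_eq_abs, Real.rpow_two, sq_abs,
    integral_natCast_div_sub_sq_poissonMeasure hn hx,
    ← szaszMirakjan_eq_integral_poissonMeasure hnx] using h

theorem szasz_mirakjan_uniform_bound_general {L α : ℝ} (hα : 0 ≤ α) (hα2 : α ≤ 2) (hL : 0 ≤ L)
    (hn : 0 < n) (hx : 0 < x)
    (hf : ∀ y, 0 ≤ y → |f x - f y| ≤ L * |x - y| ^ α / (x + y) ^ (α / 2)) :
    |f x - szaszMirakjan n f x| ≤ L / n ^ (α / 2) := by
  have hholder (y : ℝ) (hy : 0 ≤ y) : |f x - f y| ≤ L / x ^ (α / 2) * |x - y| ^ α :=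
    calc |f x - f y| ≤ L * |x - y| ^ α / (x + y) ^ (α / 2) := hf y hy
      _ ≤ L * |x - y| ^ α / x ^ (α / 2) := by
        gcongr
        exact le_add_of_nonneg_right hy
      _ = L / x ^ (α / 2) * |x - y| ^ α := mul_div_right_comm _ _ _
  calc |f x - szaszMirakjan n f x|
      ≤ L / x ^ (α / 2) * (x / n) ^ (α / 2) :=
        abs_sub_szaszMirakjan_le_of_holder_at hα hα2 (by positivity) hn hx.le hholder
    _ = L / n ^ (α / 2) := by
        rw [Real.div_rpow hx.le hn.le, div_mul_div_cancel₀ (Real.rpow_pos_of_pos hx _).ne']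

end SzaszMirakjan

/-- Uniform error bound for the Szász-Mirakjan operator for a function satisfying the general
Hölder-type condition with `γ = 0` and `β = α/2`: `|f(x) - S_n(f;x)| ≤ L / n^(α/2)`. -/
theorem szasz_mirakjan_uniform_bound
    (f : ℝ → ℝ) (L α : ℝ) (hL : 0 < L) (hα : 0 < α) (hα1 : α ≤ 1)
    (hf : ∀ y z : ℝ, 0 ≤ y → 0 ≤ z →
      |f y - f z| ≤ L * |y - z| ^ α / (y + z) ^ (α / 2))
    (n : ℕ) (hn : 1 ≤ n) (x : ℝ) (hx : 0 < x) :
    |f x - ∑' (k : ℕ), f ((k : ℝ) / n) * (Real.exp (-(n * x)) * (n * x) ^ k / k.factorial)|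
      ≤ L / (n : ℝ) ^ (α / 2) :=
  szasz_mirakjan_uniform_bound_general hα.le (hα1.trans one_le_two) hL.le (mod_cast hn) hx
    fun y hy => hf x y hx.le hy
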